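/- arXiv:1503.05735 — 2 statements merged into one kernel-verified Lean document; each statement's English description precedes it below -/
import Mathlib

section
/- Let Q_n^(ℓ) be the generator of the symmetric exclusion process on the complete graph K_n with ℓ ≤ ⌊n/2⌋ black marbles and rate α > 0. Then for each j = 1, ..., ℓ, the number α·j·(n-j+1) is an eigenvalue of -Q_n^(ℓ) with multiplicity C(n,j) - C(n,j-1), and together with the eigenvalue 0 (multiplicity 1) these account for all eigenvalues of -Q_n^(ℓ) with multiplicity. -/
open Finset

/-- Swap the values of a configuration at two vertices. -/
def swapAt {V : Type*} [DecidableEq V] (x : V → Bool) (u v : V) : V → Bool :=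
  fun w => if w = u then x v else if w = v then x u else x w

/-- Number of black marbles (`true` coordinates) of a configuration. -/
def countB {V : Type*} [Fintype V] (x : V → Bool) : ℕ :=
  (Finset.univ.filter fun v => x v = true).card

/-- The negative generator `-Q` of the symmetric exclusion process on `G` with rate `α`:
`(-Qf)(x) = α Σ_{e ∈ E(G)} (f x - f x_e)`, written as half the sum over ordered adjacent pairs. -/
noncomputable def negGen {V : Type*} [Fintype V] [DecidableEq V] (G : SimpleGraph V) [DecidableRel G.Adj]
    (α : ℝ) (f : (V → Bool) → ℝ) (x : V → Bool) : ℝ :=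
  (α / 2) * ∑ u : V, ∑ v : V, if G.Adj u v then f x - f (swapAt x u v) else 0

/-- `ψ_+(x) = Σ_{v : x(v)=0} ψ(x_v)`, adding a black marble at `v`. -/
def plusOp {V : Type*} [Fintype V] [DecidableEq V] (ψ : (V → Bool) → ℝ) (x : V → Bool) : ℝ :=
  ∑ v ∈ Finset.univ.filter (fun v => x v = false), ψ (Function.update x v true)

/-- `ψ_-(x) = Σ_{v : x(v)=1} ψ(x_v)`, removing the black marble at `v`. -/
def minusOp {V : Type*} [Fintype V] [DecidableEq V] (ψ : (V → Bool) → ℝ) (x : V → Bool) : ℝ :=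
  ∑ v ∈ Finset.univ.filter (fun v => x v = true), ψ (Function.update x v false)

/-- Inner product at level `ℓ` with respect to the uniform measure on `ℓ`-subsets. -/
noncomputable def innerL {V : Type*} [Fintype V] [DecidableEq V] (ℓ : ℕ) (f g : (V → Bool) → ℝ) : ℝ :=
  (((Fintype.card V).choose ℓ : ℝ))⁻¹ *
    ∑ x ∈ Finset.univ.filter (fun x : V → Bool => countB x = ℓ), f x * g x

/-- Inner product on the full configuration space with respect to the uniform measure. -/
noncomputable def innerF {V : Type*} [Fintype V] [DecidableEq V] (f g : (V → Bool) → ℝ) : ℝ :=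
  ((2 : ℝ) ^ (Fintype.card V))⁻¹ * ∑ x : V → Bool, f x * g x

/-!
On functions of configurations, `minusOp` (raising) and `plusOp` (lowering) are adjoint, and their
commutator is `n - 2ℓ` on functions supported on `ℓ` marbles. Hence raising is injective there as
long as `2ℓ < n`. It also commutes with every permutation of the sites, and so with the generator on
any graph: eigenspaces can only grow with `ℓ`. On the complete graph, minus the generator on `j`
marbles is `α (j (n - j + 1) - raising ∘ lowering)`, so the kernel of lowering, whose dimension is
at least `C(n, j) - C(n, j - 1)`, consists of eigenfunctions with eigenvalue `α j (n - j + 1)`;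
raising them to level `ℓ` gives as large an eigenspace there. These lower bounds for `j ≤ ℓ` sum to
`C(n, ℓ)`, the dimension of the whole space, so all of them are equalities.
-/

theorem card_fiber_eq_of_le {ι κ β : Type*} [Fintype ι] [DecidableEq β] {s : Finset κ}
    {m : κ → ℕ} {ν : κ → β} {μ : ι → β} (hν : Set.InjOn ν s)
    (hle : ∀ j ∈ s, m j ≤ #{i | μ i = ν j}) (hsum : ∑ j ∈ s, m j = Fintype.card ι) :
    (∀ j ∈ s, #{i | μ i = ν j} = m j) ∧ ∀ i, ∃ j ∈ s, μ i = ν j := by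
  have card_covered : ∑ j ∈ s, #{i | μ i = ν j} = #{i | μ i ∈ s.image ν} := by
    rw [← sum_card_fiberwise_eq_card_filter, sum_image hν]
  have sum_eq : ∑ j ∈ s, m j = ∑ j ∈ s, #{i | μ i = ν j} :=
    (sum_le_sum hle).antisymm (card_covered.trans_le (card_le_univ _) |>.trans_eq hsum.symm)
  refine ⟨fun j hj ↦ ((sum_eq_sum_iff_of_le hle).1 sum_eq j hj).symm, fun i ↦ ?_⟩
  have covered : ({i | μ i ∈ s.image ν} : Finset ι) = univ :=
    (card_eq_iff_eq_univ _).1 (by rw [← card_covered, ← sum_eq, hsum])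
  simpa [eq_comm] using filter_eq_self.1 covered i (mem_univ i)

theorem finrank_eigenspace_le_of_injective {K M N : Type*} [Field K] [AddCommGroup M] [Module K M]
    [AddCommGroup N] [Module K N] [FiniteDimensional K N] {T : Module.End K M}
    {S : Module.End K N} {φ : M →ₗ[K] N} (hφ : Function.Injective φ)
    (hcomm : ∀ x, φ (T x) = S (φ x)) (μ : K) :
    Module.finrank K (T.eigenspace μ) ≤ Module.finrank K (S.eigenspace μ) := by
  have mapsTo : ∀ x ∈ T.eigenspace μ, φ x ∈ S.eigenspace μ := fun x hx ↦ by
    rw [Module.End.mem_eigenspace_iff] at hx ⊢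
    rw [← hcomm, hx, map_smul]
  exact LinearMap.finrank_le_finrank_of_injective (f := φ.restrict mapsTo)
    fun x y hxy ↦ Subtype.ext (hφ (congrArg Subtype.val hxy))

namespace Exclusion

/-- The dimension `C(n, j) - C(n, j - 1)` of the space of harmonic functions on the `j`-subsets of
an `n`-set, with the convention `C(n, -1) = 0`. The truncated subtraction is the intended one for
`2 * j ≤ n`. -/
def harmonicDim (n : ℕ) : ℕ → ℕ
  | 0 => 1
  | j + 1 => n.choose (j + 1) - n.choose j

theorem sum_harmonicDim {n ℓ : ℕ} (hℓ : 2 * ℓ ≤ n) :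
    ∑ j ∈ range (ℓ + 1), harmonicDim n j = n.choose ℓ := by
  induction ℓ with
  | zero => simp [harmonicDim]
  | succ ℓ ih =>
    rw [sum_range_succ, ih (by lia), harmonicDim]
    exact Nat.add_sub_of_le (Nat.choose_le_succ_of_lt_half_left (by lia))

theorem injOn_eigenvalue {α : ℝ} (hα : α ≠ 0) (n : ℕ) :
    Set.InjOn (fun j : ℕ ↦ α * j * ((n : ℝ) - j + 1)) {j | 2 * j ≤ n} := by
  intro j hj k hk hjk
  have hj' : (2 * j : ℝ) ≤ n := mod_cast hj
  have hk' : (2 * k : ℝ) ≤ n := mod_cast hk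
  have factored : α * ((j - k : ℝ) * (n + 1 - j - k)) = 0 := by linear_combination hjk
  have second_ne : (n + 1 - j - k : ℝ) ≠ 0 := by linarith
  have first_eq : (j - k : ℝ) = 0 := by simpa [hα, second_ne] using factored
  exact Nat.cast_injective (sub_eq_zero.1 first_eq)

section Configurations

variable {V : Type*}

section Swap

variable [DecidableEq V]

theorem swapAt_eq_comp_swap (x : V → Bool) (u v : V) : swapAt x u v = x ∘ Equiv.swap u v := by
  ext w
  simp only [swapAt, Function.comp_apply, Equiv.swap_apply_def]
  split_ifs <;> rfl

theorem swapAt_comm (x : V → Bool) (u v : V) : swapAt x u v = swapAt x v u := by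
  rw [swapAt_eq_comp_swap, swapAt_eq_comp_swap, Equiv.swap_comm]

theorem swapAt_eq_self {x : V → Bool} {u v : V} (h : x u = x v) : swapAt x u v = x := by
  grind [swapAt]

theorem swapAt_eq_update_update {x : V → Bool} {u v : V} (hu : x u = true) (hv : x v = false) :
    swapAt x u v = Function.update (Function.update x u false) v true := by
  grind [swapAt, Function.update_apply]

end Swap

variable [Fintype V]

theorem card_white_add_countB (x : V → Bool) :
    #{v | x v = false} + countB x = Fintype.card V := by
  simpa [countB] using card_filter_add_card_filter_not (s := univ) (fun v ↦ x v = false)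

theorem countB_comp_perm (x : V → Bool) (σ : Equiv.Perm V) : countB (x ∘ σ) = countB x :=
  card_equiv σ (by simp)

theorem sum_sum_eq_two_mul_sum_black_white (x : V → Bool) {h : V → V → ℝ}
    (hsymm : ∀ u v, h u v = h v u) (hzero : ∀ u v, x u = x v → h u v = 0) :
    ∑ u, ∑ v, h u v = 2 * ∑ u with x u = true, ∑ v with x v = false, h u v := by
  have black (u : V) (hu : x u = true) : ∑ v, h u v = ∑ v with x v = false, h u v :=
    (sum_filter_of_ne fun v _ hne ↦ by grind).symm
  have white (u : V) (hu : x u = false) : ∑ v, h u v = ∑ v with x v = true, h v u := by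
    simp only [hsymm u]
    exact (sum_filter_of_ne fun v _ hne ↦ by grind).symm
  rw [← sum_filter_add_sum_filter_not univ (fun u ↦ x u = true)]
  simp only [Bool.not_eq_true]
  rw [sum_congr rfl fun u hu ↦ black u (mem_filter.1 hu).2,
    sum_congr rfl fun u hu ↦ white u (mem_filter.1 hu).2, two_mul,
    sum_comm (s := {u | x u = false})]

variable [DecidableEq V]

theorem card_countB_eq (ℓ : ℕ) :
    Fintype.card {x : V → Bool // countB x = ℓ} = (Fintype.card V).choose ℓ := by
  rw [← Fintype.card_finset_len]
  exact Fintype.card_congr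
    { toFun x := ⟨univ.filter fun v ↦ x.1 v = true, x.2⟩
      invFun s := ⟨fun v ↦ decide (v ∈ s.1), by simpa [countB] using s.2⟩
      left_inv x := by simp
      right_inv s := by simp }

theorem filter_update_eq_insert (x : V → Bool) (v : V) (c : Bool) :
    univ.filter (fun w ↦ Function.update x v c w = c) =
      insert v (univ.filter fun w ↦ x w = c) := by
  grind [Function.update_apply]

theorem countB_update_true {x : V → Bool} {v : V} (hv : x v = false) :
    countB (Function.update x v true) = countB x + 1 := by
  rw [countB, filter_update_eq_insert, card_insert_of_notMem (by simp [hv]), countB]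

theorem countB_update_false {x : V → Bool} {v : V} (hv : x v = true) :
    countB (Function.update x v false) + 1 = countB x := by
  rw [← countB_update_true (Function.update_self v false x), Function.update_idem, ← hv,
    Function.update_eq_self]

end Configurations

section Ladder

variable {V : Type*} [Fintype V] [DecidableEq V] (f g : (V → Bool) → ℝ) (x : V → Bool)

theorem minusOp_plusOp :
    minusOp (plusOp f) x =
      countB x * f x + ∑ u with x u = true, ∑ v with x v = false, f (swapAt x u v) := by
  have remove_then_add (u : V) (hu : x u = true) :
      plusOp f (Function.update x u false) = f x + ∑ v with x v = false, f (swapAt x u v) := by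
    rw [plusOp, filter_update_eq_insert, sum_insert (by simp [hu]), Function.update_idem, ← hu,
      Function.update_eq_self, hu]
    congr 1
    exact sum_congr rfl fun v hv ↦ by rw [swapAt_eq_update_update hu (mem_filter.1 hv).2]
  rw [minusOp, sum_congr rfl fun u hu ↦ remove_then_add u (mem_filter.1 hu).2, sum_add_distrib,
    sum_const, nsmul_eq_mul, countB]

theorem plusOp_minusOp :
    plusOp (minusOp f) x =
      (Fintype.card V - countB x) * f x +
        ∑ u with x u = true, ∑ v with x v = false, f (swapAt x u v) := by
  have add_then_remove (v : V) (hv : x v = false) :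
      minusOp f (Function.update x v true) = f x + ∑ u with x u = true, f (swapAt x u v) := by
    rw [minusOp, filter_update_eq_insert, sum_insert (by simp [hv]), Function.update_idem, ← hv,
      Function.update_eq_self, hv]
    congr 1
    refine sum_congr rfl fun u hu ↦ ?_
    have hu : x u = true := (mem_filter.1 hu).2
    rw [swapAt_eq_update_update hu hv, Function.update_comm (by grind)]
  have card_white : (#{v | x v = false} : ℝ) = Fintype.card V - countB x := by
    rw [← card_white_add_countB x]
    push_cast
    ring
  rw [plusOp, sum_congr rfl fun v hv ↦ add_then_remove v (mem_filter.1 hv).2, sum_add_distrib,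
    sum_const, nsmul_eq_mul, card_white, sum_comm]

theorem plusOp_minusOp_sub_minusOp_plusOp :
    plusOp (minusOp f) x - minusOp (plusOp f) x = (Fintype.card V - 2 * countB x) * f x := by
  rw [plusOp_minusOp, minusOp_plusOp]
  ring

theorem sum_minusOp_mul : ∑ x, minusOp f x * g x = ∑ x, f x * plusOp g x := by
  simp only [minusOp, plusOp, sum_mul, mul_sum, sum_filter, ite_mul, mul_ite, zero_mul,
    mul_zero]
  rw [sum_comm, sum_comm (s := univ (α := V → Bool))]
  refine sum_congr rfl fun v _ ↦ ?_
  rw [← sum_filter, ← sum_filter]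
  have restore {x : V → Bool} {c : Bool} (hx : x v = c) : Function.update x v c = x := by
    rw [← hx, Function.update_eq_self]
  refine sum_nbij' (Function.update · v false) (Function.update · v true) ?_ ?_ ?_ ?_ ?_ <;>
    simp +contextual [restore]

theorem minusOp_comp_perm (σ : Equiv.Perm V) :
    minusOp f (x ∘ σ) = minusOp (fun y ↦ f (y ∘ σ)) x := by
  refine sum_equiv σ (by simp) fun v _ ↦ ?_
  simp only [Function.update_comp_equiv, Equiv.symm_apply_apply]

theorem negGen_top (α : ℝ) :
    negGen (⊤ : SimpleGraph V) α f x =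
      α * (countB x * (Fintype.card V - countB x + 1) * f x - minusOp (plusOp f) x) := by
  have drop_adj (u v : V) : (if (⊤ : SimpleGraph V).Adj u v then f x - f (swapAt x u v) else 0) =
      f x - f (swapAt x u v) := by
    rcases eq_or_ne u v with rfl | huv
    · simp [swapAt_eq_self]
    · simp [huv]
  simp only [negGen, drop_adj]
  rw [sum_sum_eq_two_mul_sum_black_white x (fun u v ↦ by rw [swapAt_comm])
    (fun u v huv ↦ by rw [swapAt_eq_self huv, sub_self]), minusOp_plusOp,
    ← card_white_add_countB x]
  simp only [sum_sub_distrib, sum_const, nsmul_eq_mul, countB]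
  push_cast
  ring

end Ladder

section Operators

variable {V : Type*}

/-- The action of a permutation of the sites on functions of configurations. -/
noncomputable def permute (σ : Equiv.Perm V) : Module.End ℝ (EuclideanSpace ℝ (V → Bool)) where
  toFun f := WithLp.toLp 2 fun x ↦ f (x ∘ σ)
  map_add' _ _ := rfl
  map_smul' _ _ := rfl

@[simp]
theorem permute_apply (σ : Equiv.Perm V) (f : EuclideanSpace ℝ (V → Bool)) (x : V → Bool) :
    permute σ f x = f (x ∘ σ) := rfl

variable [Fintype V] [DecidableEq V]

/-- `minusOp` as an operator. It removes a marble from the argument, hence moves the support of a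
function from the configurations with `ℓ` marbles to those with `ℓ + 1`. -/
noncomputable def raising : Module.End ℝ (EuclideanSpace ℝ (V → Bool)) where
  toFun f := WithLp.toLp 2 (minusOp f)
  map_add' f g := by ext x; simp [minusOp, sum_add_distrib]
  map_smul' c f := by ext x; simp [minusOp, mul_sum]

/-- `plusOp` as an operator, the adjoint of `raising`. -/
noncomputable def lowering : Module.End ℝ (EuclideanSpace ℝ (V → Bool)) where
  toFun f := WithLp.toLp 2 (plusOp f)
  map_add' f g := by ext x; simp [plusOp, sum_add_distrib]
  map_smul' c f := by ext x; simp [plusOp, mul_sum]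

/-- `negGen` as an operator, written in terms of transpositions of the sites. -/
noncomputable def generator (G : SimpleGraph V) [DecidableRel G.Adj] (α : ℝ) :
    Module.End ℝ (EuclideanSpace ℝ (V → Bool)) :=
  (α / 2) • ∑ u, ∑ v, if G.Adj u v then 1 - permute (Equiv.swap u v) else 0

@[simp]
theorem raising_apply (f : EuclideanSpace ℝ (V → Bool)) (x : V → Bool) :
    raising f x = minusOp f x := rfl

@[simp]
theorem lowering_apply (f : EuclideanSpace ℝ (V → Bool)) (x : V → Bool) :
    lowering f x = plusOp f x := rfl

theorem inner_raising (f g : EuclideanSpace ℝ (V → Bool)) :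
    inner ℝ (raising f) g = inner ℝ f (lowering g) := by
  simpa [PiLp.inner_apply, mul_comm] using sum_minusOp_mul f g

theorem commute_raising_permute (σ : Equiv.Perm V) : Commute raising (permute σ) := by
  ext f x
  exact (minusOp_comp_perm f x σ).symm

theorem isSymmetric_permute_swap (u v : V) : (permute (Equiv.swap u v)).IsSymmetric := by
  intro f g
  simp only [PiLp.inner_apply, permute_apply]
  refine Fintype.sum_equiv ((Equiv.swap u v).arrowCongr (.refl Bool)) _ _ fun x ↦ ?_
  have invol : (x ∘ Equiv.swap u v) ∘ Equiv.swap u v = x := by ext; simp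
  simp [Equiv.arrowCongr, invol]

variable (G : SimpleGraph V) [DecidableRel G.Adj] (α : ℝ)

theorem generator_apply (f : EuclideanSpace ℝ (V → Bool)) (x : V → Bool) :
    generator G α f x = negGen G α f x := by
  simp only [generator, negGen, LinearMap.smul_apply, LinearMap.sum_apply, PiLp.smul_apply,
    smul_eq_mul, WithLp.ofLp_sum, Finset.sum_apply, swapAt_eq_comp_swap]
  congr! 5
  split_ifs <;> simp

theorem negGen_const_mul_of_generator_eq_smul {f : EuclideanSpace ℝ (V → Bool)} {μ : ℝ}
    (hf : generator G α f = μ • f) (c : ℝ) (x : V → Bool) :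
    negGen G α (fun y ↦ c * f y) x = μ * (c * f x) := by
  have scaled : generator G α (c • f) = μ • c • f := by rw [map_smul, hf, smul_comm]
  exact (generator_apply G α (c • f) x).symm.trans
    (congrArg (fun h : EuclideanSpace ℝ (V → Bool) ↦ h x) scaled)

theorem isSymmetric_generator : (generator G α).IsSymmetric := by
  refine .smul (by simp) <|
    LinearMap.isSymmetric_sum _ fun u _ ↦ LinearMap.isSymmetric_sum _ fun v _ ↦ ?_
  split_ifs
  · exact .sub .one (isSymmetric_permute_swap u v)
  · exact .zero

theorem commute_raising_generator : Commute raising (generator G α) := by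
  refine .smul_right (.sum_right _ _ _ fun u _ ↦ .sum_right _ _ _ fun v _ ↦ ?_) _
  split_ifs
  · exact (Commute.one_right _).sub_right (commute_raising_permute _)
  · exact .zero_right _

end Operators

section Level

variable {V : Type*} [Fintype V] {ℓ : ℕ}

variable (V) in
/-- The functions supported on the configurations with `ℓ` black marbles. -/
def level (ℓ : ℕ) : Submodule ℝ (EuclideanSpace ℝ (V → Bool)) where
  carrier := {f | ∀ x, countB x ≠ ℓ → f x = 0}
  add_mem' hf hg x hx := by simp [hf x hx, hg x hx]
  zero_mem' _ _ := rfl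
  smul_mem' c f hf x hx := by simp [hf x hx]

theorem finrank_level (ℓ : ℕ) :
    Module.finrank ℝ (level V ℓ) = (Fintype.card V).choose ℓ := by
  classical
  let restrictToLevel : level V ℓ ≃ₗ[ℝ] ({x : V → Bool // countB x = ℓ} → ℝ) :=
    { toFun f x := f.1 x.1
      map_add' _ _ := rfl
      map_smul' _ _ := rfl
      invFun g := ⟨WithLp.toLp 2 fun x ↦ if h : countB x = ℓ then g ⟨x, h⟩ else 0,
        fun x hx ↦ by simp [hx]⟩
      left_inv f := by
        ext x
        by_cases h : countB x = ℓ
        · simp [h]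
        · simp [h, f.2 x h]
      right_inv g := by
        ext x
        simp [x.2] }
  rw [restrictToLevel.finrank_eq, Module.finrank_fintype_fun_eq_card, card_countB_eq]

theorem permute_mem_level (σ : Equiv.Perm V) {f : EuclideanSpace ℝ (V → Bool)}
    (hf : f ∈ level V ℓ) : permute σ f ∈ level V ℓ := fun x hx ↦
  hf _ (by rwa [countB_comp_perm])

variable [DecidableEq V]

theorem raising_mem_level {f : EuclideanSpace ℝ (V → Bool)} (hf : f ∈ level V ℓ) :
    raising f ∈ level V (ℓ + 1) := fun x hx ↦
  sum_eq_zero fun v hv ↦ hf _ <| by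
    have := countB_update_false (mem_filter.1 hv).2
    lia

theorem lowering_mem_level {f : EuclideanSpace ℝ (V → Bool)} (hf : f ∈ level V (ℓ + 1)) :
    lowering f ∈ level V ℓ := fun x hx ↦
  sum_eq_zero fun v hv ↦ hf _ <| by
    rw [countB_update_true (mem_filter.1 hv).2]
    lia

theorem lowering_eq_zero_of_mem_level_zero {f : EuclideanSpace ℝ (V → Bool)}
    (hf : f ∈ level V 0) : lowering f = 0 := by
  ext x
  exact sum_eq_zero fun v hv ↦ hf _ <| by
    rw [countB_update_true (mem_filter.1 hv).2]
    lia

theorem lowering_raising {f : EuclideanSpace ℝ (V → Bool)} (hf : f ∈ level V ℓ) :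
    lowering (raising f) = raising (lowering f) + (Fintype.card V - 2 * ℓ : ℝ) • f := by
  ext x
  have pointwise := plusOp_minusOp_sub_minusOp_plusOp f x
  by_cases hx : countB x = ℓ
  · subst hx
    exact sub_eq_iff_eq_add'.1 pointwise
  · rw [hf x hx, mul_zero, sub_eq_zero] at pointwise
    rw [PiLp.add_apply, PiLp.smul_apply, hf x hx, smul_zero, add_zero]
    exact pointwise

theorem norm_raising_sq {f : EuclideanSpace ℝ (V → Bool)} (hf : f ∈ level V ℓ) :
    ‖raising f‖ ^ 2 = ‖lowering f‖ ^ 2 + (Fintype.card V - 2 * ℓ) * ‖f‖ ^ 2 := by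
  rw [← real_inner_self_eq_norm_sq, inner_raising, lowering_raising hf, inner_add_right,
    real_inner_smul_right, real_inner_comm, inner_raising, real_inner_self_eq_norm_sq,
    real_inner_self_eq_norm_sq]

theorem injective_raising_domRestrict (hℓ : 2 * ℓ < Fintype.card V) :
    Function.Injective (raising.domRestrict (level V ℓ)) := by
  rw [injective_iff_map_eq_zero]
  rintro ⟨f, hf⟩ hraise
  have norm_sq := norm_raising_sq hf
  rw [show raising f = 0 from hraise, norm_zero] at norm_sq
  have gap : (0 : ℝ) < Fintype.card V - 2 * ℓ := sub_pos.2 (mod_cast hℓ)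
  have : ‖f‖ ^ 2 = 0 := by nlinarith [sq_nonneg ‖lowering f‖, sq_nonneg ‖f‖]
  simpa using this

theorem innerL_sqrt_choose_mul (hℓ : ℓ ≤ Fintype.card V) {f g : EuclideanSpace ℝ (V → Bool)}
    (hf : f ∈ level V ℓ) :
    innerL ℓ (fun x ↦ √((Fintype.card V).choose ℓ) * f x)
      (fun x ↦ √((Fintype.card V).choose ℓ) * g x) = inner ℝ f g := by
  have choose_pos : (0 : ℝ) < (Fintype.card V).choose ℓ := mod_cast Nat.choose_pos hℓ
  have sum_level : ∑ x with countB x = ℓ, f x * g x = ∑ x, f x * g x :=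
    sum_filter_of_ne fun x _ hne ↦ by
      by_contra hx
      simp [hf x hx] at hne
  simp only [innerL, mul_mul_mul_comm _ (f _), Real.mul_self_sqrt choose_pos.le, ← mul_sum]
  rw [inv_mul_cancel_left₀ choose_pos.ne', sum_level]
  simp [PiLp.inner_apply, mul_comm]

end Level

section LevelGenerator

variable {V : Type*} [Fintype V] [DecidableEq V] (G : SimpleGraph V) [DecidableRel G.Adj] (α : ℝ)

theorem generator_mem_level {ℓ : ℕ} (f : EuclideanSpace ℝ (V → Bool)) (hf : f ∈ level V ℓ) :
    generator G α f ∈ level V ℓ := by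
  simp only [generator, LinearMap.smul_apply, LinearMap.sum_apply]
  refine Submodule.smul_mem _ _ (Submodule.sum_mem _ fun u _ ↦ Submodule.sum_mem _ fun v _ ↦ ?_)
  split_ifs
  · exact Submodule.sub_mem _ hf (permute_mem_level _ hf)
  · exact Submodule.zero_mem _

/-- The negative generator `-Q^(ℓ)` of the process with `ℓ` black marbles. -/
noncomputable def levelGenerator (ℓ : ℕ) : Module.End ℝ (level V ℓ) :=
  (generator G α).restrict (generator_mem_level G α)

theorem isSymmetric_levelGenerator (ℓ : ℕ) : (levelGenerator G α ℓ).IsSymmetric :=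
  (isSymmetric_generator G α).restrict_invariant (generator_mem_level G α)

theorem finrank_eigenspace_levelGenerator_le_succ {ℓ : ℕ} (hℓ : 2 * ℓ < Fintype.card V) (μ : ℝ) :
    Module.finrank ℝ ((levelGenerator G α ℓ).eigenspace μ) ≤
      Module.finrank ℝ ((levelGenerator G α (ℓ + 1)).eigenspace μ) := by
  refine finrank_eigenspace_le_of_injective
    (φ := raising.restrict fun f hf ↦ raising_mem_level hf) (fun f g hfg ↦ ?_) (fun f ↦ ?_) μ
  · exact injective_raising_domRestrict hℓ (congrArg Subtype.val hfg)
  · exact Subtype.ext (LinearMap.congr_fun (commute_raising_generator G α) f.1)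

theorem finrank_eigenspace_levelGenerator_mono {j ℓ : ℕ} (hj : j ≤ ℓ)
    (hℓ : 2 * ℓ ≤ Fintype.card V) (μ : ℝ) :
    Module.finrank ℝ ((levelGenerator G α j).eigenspace μ) ≤
      Module.finrank ℝ ((levelGenerator G α ℓ).eigenspace μ) := by
  induction ℓ, hj using Nat.le_induction with
  | base => rfl
  | succ k _ ih =>
    exact (ih (by lia)).trans (finrank_eigenspace_levelGenerator_le_succ G α (by lia) μ)

end LevelGenerator

section Harmonic

variable {V : Type*} [Fintype V] [DecidableEq V]

variable (V) in
/-- The harmonic functions on level `j`, those annihilated by `lowering`. -/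
noncomputable def harmonic (j : ℕ) : Submodule ℝ (level V j) :=
  LinearMap.ker (lowering.domRestrict (level V j))

theorem harmonicDim_le_finrank_harmonic (j : ℕ) :
    harmonicDim (Fintype.card V) j ≤ Module.finrank ℝ (harmonic V j) := by
  have rank_nullity := (lowering.domRestrict (level V j)).finrank_range_add_finrank_ker
  rw [finrank_level] at rank_nullity
  cases j with
  | zero =>
    have eq_zero : lowering.domRestrict (level V 0) = 0 :=
      LinearMap.ext fun f ↦ lowering_eq_zero_of_mem_level_zero f.2
    rw [eq_zero, LinearMap.range_zero, finrank_bot, zero_add, Nat.choose_zero_right, ← eq_zero]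
      at rank_nullity
    exact rank_nullity.ge
  | succ j =>
    have range_le : LinearMap.range (lowering.domRestrict (level V (j + 1))) ≤ level V j := by
      rintro _ ⟨f, rfl⟩
      exact lowering_mem_level f.2
    have rank_le := Submodule.finrank_mono range_le
    rw [finrank_level] at rank_le
    rw [harmonicDim, harmonic]
    omega

theorem harmonic_le_eigenspace (α : ℝ) (j : ℕ) :
    harmonic V j ≤ (levelGenerator (⊤ : SimpleGraph V) α j).eigenspace
      (α * j * (Fintype.card V - j + 1)) := by
  rintro ⟨f, hf⟩ hharm
  have raising_lowering : raising (lowering f) = 0 := by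
    rw [show lowering f = 0 from hharm, map_zero]
  rw [Module.End.mem_eigenspace_iff]
  ext x
  have minusOp_plusOp_eq_zero : minusOp (plusOp f) x = 0 :=
    congrArg (fun h : EuclideanSpace ℝ (V → Bool) ↦ h x) raising_lowering
  change generator ⊤ α f x = α * j * (Fintype.card V - j + 1) * f x
  rw [generator_apply, negGen_top, minusOp_plusOp_eq_zero]
  by_cases hx : countB x = j
  · subst hx
    ring
  · simp [hf x hx]

theorem harmonicDim_le_finrank_eigenspace (α : ℝ) {j ℓ : ℕ} (hj : j ≤ ℓ)
    (hℓ : 2 * ℓ ≤ Fintype.card V) :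
    harmonicDim (Fintype.card V) j ≤
      Module.finrank ℝ ((levelGenerator (⊤ : SimpleGraph V) α ℓ).eigenspace
        (α * j * (Fintype.card V - j + 1))) :=
  calc harmonicDim (Fintype.card V) j
    _ ≤ Module.finrank ℝ (harmonic V j) := harmonicDim_le_finrank_harmonic j
    _ ≤ _ := Submodule.finrank_mono (harmonic_le_eigenspace α j)
    _ ≤ _ := finrank_eigenspace_levelGenerator_mono _ α hj hℓ _

theorem card_filter_eigenvalues_levelGenerator_top {α : ℝ} (hα : α ≠ 0) {ℓ : ℕ}
    (hℓ : 2 * ℓ ≤ Fintype.card V) :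
    letI mu := (isSymmetric_levelGenerator (⊤ : SimpleGraph V) α ℓ).eigenvalues (finrank_level ℓ)
    (∀ j ∈ range (ℓ + 1), #{i | mu i = α * j * ((Fintype.card V : ℝ) - j + 1)} =
        harmonicDim (Fintype.card V) j) ∧
      ∀ i, ∃ j ∈ range (ℓ + 1), mu i = α * j * ((Fintype.card V : ℝ) - j + 1) := by
  refine card_fiber_eq_of_le ((injOn_eigenvalue hα (Fintype.card V)).mono fun j hj ↦ ?_)
    (fun j hj ↦ ?_) ?_
  · simp only [coe_range, Set.mem_Iio] at hj
    exact (show 2 * j ≤ 2 * ℓ by lia).trans hℓ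
  · exact (harmonicDim_le_finrank_eigenspace α (by simpa [Nat.lt_succ_iff] using hj) hℓ).trans_eq
      (LinearMap.IsSymmetric.card_filter_eigenvalues_eq _ _ _).symm
  · rw [sum_harmonicDim hℓ, Fintype.card_fin]

end Harmonic

end Exclusion

open Exclusion in
theorem complete_graph_spectrum_general {V : Type*} [Fintype V] [DecidableEq V] {n : ℕ}
    (hn : Fintype.card V = n) (ℓ : ℕ) (hℓ : 2 * ℓ ≤ n) (α : ℝ) (hα : α ≠ 0) :
    ∃ (ψ : Fin (n.choose ℓ) → (V → Bool) → ℝ) (mu : Fin (n.choose ℓ) → ℝ),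
      (∀ i, ∀ x, countB x = ℓ →
        negGen (⊤ : SimpleGraph V) α (ψ i) x = mu i * ψ i x) ∧
      (∀ i j, innerL ℓ (ψ i) (ψ j) = if i = j then 1 else 0) ∧
      #{i | mu i = 0} = 1 ∧
      (∀ j ∈ Icc 1 ℓ,
        #{i | mu i = α * j * ((n : ℝ) - j + 1)} = n.choose j - n.choose (j - 1)) ∧
      (∀ i, mu i = 0 ∨ ∃ j ∈ Icc 1 ℓ, mu i = α * j * ((n : ℝ) - j + 1)) := by
  subst hn
  have symm := isSymmetric_levelGenerator (⊤ : SimpleGraph V) α ℓ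
  let b := symm.eigenvectorBasis (finrank_level ℓ)
  obtain ⟨card_eq, exhaust⟩ := card_filter_eigenvalues_levelGenerator_top hα hℓ
  refine ⟨fun i x ↦ √((Fintype.card V).choose ℓ) * (b i).1 x, symm.eigenvalues (finrank_level ℓ),
    fun i x _ ↦ ?_, fun i j ↦ ?_, ?_, fun j hj ↦ ?_, fun i ↦ ?_⟩
  · exact negGen_const_mul_of_generator_eq_smul ⊤ α
      (congrArg Subtype.val (symm.apply_eigenvectorBasis (finrank_level ℓ) i)) _ x
  · rw [innerL_sqrt_choose_mul (by lia) (b i).2]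
    exact orthonormal_iff_ite.1 b.orthonormal i j
  · simpa [harmonicDim] using card_eq 0 (by simp)
  · obtain ⟨k, rfl⟩ := Nat.exists_eq_add_of_le' (mem_Icc.1 hj).1
    exact card_eq (k + 1) (mem_range_succ_iff.2 (mem_Icc.1 hj).2)
  · obtain ⟨j, hj, hmu⟩ := exhaust i
    rcases Nat.eq_zero_or_pos j with rfl | hpos
    · exact .inl (by simpa using hmu)
    · exact .inr ⟨j, mem_Icc.2 ⟨hpos, mem_range_succ_iff.1 hj⟩, hmu⟩

/-- Spectrum of the exclusion generator on K_n with ℓ ≤ ⌊n/2⌋ black marbles: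
there is an orthonormal eigenbasis in which 0 has multiplicity 1, each value
α·j·(n-j+1) (1 ≤ j ≤ ℓ) has multiplicity C(n,j) - C(n,j-1), and every
eigenvalue is of one of these forms. -/
theorem complete_graph_spectrum (n : ℕ) (hn : 1 ≤ n) (ℓ : ℕ) (hℓ : 2 * ℓ ≤ n)
    (α : ℝ) (hα : 0 < α) :
    ∃ (ψ : Fin (n.choose ℓ) → (Fin n → Bool) → ℝ) (mu : Fin (n.choose ℓ) → ℝ),
      (∀ i, ∀ x, countB x = ℓ →
        negGen (⊤ : SimpleGraph (Fin n)) α (ψ i) x = mu i * ψ i x) ∧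
      (∀ i j, innerL ℓ (ψ i) (ψ j) = if i = j then 1 else 0) ∧
      (Finset.univ.filter (fun i => mu i = 0)).card = 1 ∧
      (∀ j ∈ Finset.Icc 1 ℓ,
        (Finset.univ.filter
          (fun i => mu i = α * j * ((n : ℝ) - j + 1))).card
            = n.choose j - n.choose (j - 1)) ∧
      (∀ i, mu i = 0 ∨ ∃ j ∈ Finset.Icc 1 ℓ, mu i = α * j * ((n : ℝ) - j + 1)) := by
  exact complete_graph_spectrum_general (Fintype.card_fin n) ℓ hℓ α hα.ne'
end

section
/- Let Q and Q' be the negative-definite-ordered generators of symmetric exclusion processes with the same rate α on finite connected graphs G and G' on the same vertex set with E(G') ⊆ E(G). Let {ψ_j} be an orthonormal eigenbasis of -Q with eigenvalues {λ_j}, and {χ_j} an orthonormal eigenbasis of -Q' with eigenvalues {μ_j}, with respect to the uniform measure on {0,1}^{V(G)}; assume the kernel of Q equals the kernel of Q' (as subspaces). Then for any f : {0,1}^{V(G)} → ℝ and any k, k' > 0: Σ_{j : μ_j > k'} ⟨f, χ_j⟩² ≤ ( sqrt( (k/k') · Σ_{j : 0 < λ_j ≤ k} ⟨f, ψ_j⟩²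 ) + sqrt( Σ_{j : λ_j > k} ⟨f, ψ_j⟩² ) )². -/
open Finset

/-!
In the sense of quadratic forms `-Q' ≤ -Q`, because `Q' - Q` is the negative generator of the
exclusion process on `G \ G'`. Write `f = u + v` with `u` the spectral part `λ ≤ k` of `f` and `v`
the part `λ > k`, and let `P` be the spectral projection `μ > k'` of `-Q'`. Then
`k' ‖P u‖² ≤ ⟨-Q' u, u⟩ ≤ ⟨-Q u, u⟩ ≤ k ∑_{0 < λ_j ≤ k} ⟨f, ψ_j⟩²`, the last step because the part
of `u` in the kernel of `Q` has no energy, while `‖P v‖ ≤ ‖v‖`. Conclude by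
`‖P f‖ ≤ ‖P u‖ + ‖P v‖`.
-/

section SpectralTruncation

open RCLike

variable {𝕜 E ι κ : Type*} [RCLike 𝕜] [NormedAddCommGroup E] [InnerProductSpace 𝕜 E]
  [Fintype ι] [Fintype κ]

/-- The orthogonal projection onto the span of the vectors `b i`, `i ∈ s`, of an orthonormal basis.
For an eigenbasis and `s` cut out by a condition on the eigenvalues it is a spectral projection. -/
noncomputable def coordProj (b : OrthonormalBasis ι 𝕜 E) (s : Finset ι) : E →ₗ[𝕜] E :=
  ∑ i ∈ s, (innerₛₗ 𝕜 (b i)).smulRight (b i)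

theorem coordProj_apply (b : OrthonormalBasis ι 𝕜 E) (s : Finset ι) (x : E) :
    coordProj b s x = ∑ i ∈ s, inner 𝕜 (b i) x • b i := by
  simp [coordProj]

theorem inner_coordProj [DecidableEq ι] (b : OrthonormalBasis ι 𝕜 E) (s : Finset ι) (x : E)
    (i : ι) : inner 𝕜 (b i) (coordProj b s x) = if i ∈ s then inner 𝕜 (b i) x else 0 := by
  simp [coordProj_apply, inner_sum, inner_smul_right, orthonormal_iff_ite.mp b.orthonormal]

theorem norm_coordProj_sq (b : OrthonormalBasis ι 𝕜 E) (s : Finset ι) (x : E) :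
    ‖coordProj b s x‖ ^ 2 = ∑ i ∈ s, ‖inner 𝕜 (b i) x‖ ^ 2 := by
  classical
  simp [← b.sum_sq_norm_inner_right, inner_coordProj, apply_ite]

theorem norm_coordProj_le (b : OrthonormalBasis ι 𝕜 E) (s : Finset ι) (x : E) :
    ‖coordProj b s x‖ ≤ ‖x‖ := by
  rw [← sq_le_sq₀ (norm_nonneg _) (norm_nonneg _), norm_coordProj_sq]
  exact b.orthonormal.sum_inner_products_le x

theorem coordProj_filter_add_coordProj_filter_not (b : OrthonormalBasis ι 𝕜 E) (p : ι → Prop)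
    [DecidablePred p] (x : E) :
    coordProj b {i | p i} x + coordProj b {i | ¬ p i} x = x := by
  simp only [coordProj_apply, sum_filter_add_sum_filter_not, b.sum_repr']

variable {T T' : E →ₗ[𝕜] E} {b : OrthonormalBasis ι 𝕜 E} {b' : OrthonormalBasis κ 𝕜 E}
  {lam : ι → ℝ} {mu : κ → ℝ}

theorem re_inner_map_self_eq_sum_eigenvalue (hb : ∀ i, T (b i) = (lam i : 𝕜) • b i) (x : E) :
    re (inner 𝕜 (T x) x) = ∑ i, lam i * ‖inner 𝕜 (b i) x‖ ^ 2 := by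
  conv_lhs => rw [← b.sum_repr' x]
  simp only [map_sum, map_smul, hb, b.orthonormal.inner_sum, smul_smul]
  refine sum_congr rfl fun i _ => ?_
  have hconj : starRingEnd 𝕜 (inner 𝕜 (b i) x * lam i) * inner 𝕜 (b i) x
      = ((lam i * ‖inner 𝕜 (b i) x‖ ^ 2 : ℝ) : 𝕜) := by
    rw [map_mul, conj_ofReal, mul_right_comm, RCLike.conj_mul, mul_comm]
    norm_cast
  rw [hconj, ofReal_re]

theorem eigenvalue_nonneg (hT : T.IsPositive) (hb : ∀ i, T (b i) = (lam i : 𝕜) • b i) (i : ι) :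
    0 ≤ lam i := by
  have h := hT.re_inner_nonneg_right (b i)
  simpa [hb, inner_smul_right] using h

theorem mul_norm_coordProj_lt_sq_le (hT : T.IsPositive) (hb : ∀ i, T (b i) = (lam i : 𝕜) • b i)
    (k : ℝ) (x : E) :
    k * ‖coordProj b {i | k < lam i} x‖ ^ 2 ≤ re (inner 𝕜 (T x) x) := by
  rw [norm_coordProj_sq, re_inner_map_self_eq_sum_eigenvalue hb, mul_sum, sum_filter]
  refine sum_le_sum fun i _ => ?_
  split_ifs with hlt
  · gcongr
  · exact mul_nonneg (eigenvalue_nonneg hT hb i) (sq_nonneg _)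

theorem re_inner_map_coordProj_le_le (hb : ∀ i, T (b i) = (lam i : 𝕜) • b i) (k : ℝ) (x : E) :
    re (inner 𝕜 (T (coordProj b {i | lam i ≤ k} x)) (coordProj b {i | lam i ≤ k} x))
      ≤ k * ∑ i with 0 < lam i ∧ lam i ≤ k, ‖inner 𝕜 (b i) x‖ ^ 2 := by
  classical
  rw [re_inner_map_self_eq_sum_eigenvalue hb, mul_sum, sum_filter]
  refine sum_le_sum fun i _ => ?_
  rw [inner_coordProj]
  by_cases hle : lam i ≤ k
  · by_cases hpos : 0 < lam i
    · simp only [mem_filter_univ, hle, hpos, and_self, if_true]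
      gcongr
    · simpa [hle, hpos] using mul_nonpos_of_nonpos_of_nonneg (not_lt.mp hpos) (sq_nonneg _)
  · simp [hle]

theorem norm_coordProj_lt_le_of_le (hT' : T'.IsPositive) (hle : T' ≤ T)
    (hb : ∀ i, T (b i) = (lam i : 𝕜) • b i) (hb' : ∀ j, T' (b' j) = (mu j : 𝕜) • b' j)
    {k' : ℝ} (hk' : 0 < k') (k : ℝ) (x : E) :
    ‖coordProj b' {j | k' < mu j} x‖
      ≤ √(k / k' * ∑ i with 0 < lam i ∧ lam i ≤ k, ‖inner 𝕜 (b i) x‖ ^ 2)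
        + ‖coordProj b {i | k < lam i} x‖ := by
  set P := coordProj b' {j | k' < mu j}
  set u := coordProj b {i | lam i ≤ k} x
  set v := coordProj b {i | k < lam i} x
  have hx : u + v = x := by
    simpa only [not_le] using coordProj_filter_add_coordProj_filter_not b (lam · ≤ k) x
  have henergy : re (inner 𝕜 (T' u) u) ≤ re (inner 𝕜 (T u) u) := by
    simpa [inner_sub_left] using hle.re_inner_nonneg_left u
  have hPu : ‖P u‖ ≤ √(k / k' * ∑ i with 0 < lam i ∧ lam i ≤ k, ‖inner 𝕜 (b i) x‖ ^ 2) := by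
    refine Real.le_sqrt_of_sq_le ?_
    rw [div_mul_eq_mul_div, le_div_iff₀' hk']
    calc k' * ‖P u‖ ^ 2 ≤ re (inner 𝕜 (T' u) u) := mul_norm_coordProj_lt_sq_le hT' hb' k' u
      _ ≤ re (inner 𝕜 (T u) u) := henergy
      _ ≤ _ := re_inner_map_coordProj_le_le hb k x
  calc ‖P x‖ = ‖P u + P v‖ := by rw [← map_add, hx]
    _ ≤ ‖P u‖ + ‖P v‖ := norm_add_le _ _
    _ ≤ _ := add_le_add hPu (norm_coordProj_le _ _ _)

end SpectralTruncation

section UniformMeasure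

/-- Functions on `{0,1}^V` as vectors of Euclidean space, scaled so that `innerF` becomes the
Euclidean inner product. -/
noncomputable def uniformL2Equiv (V : Type*) [Fintype V] [DecidableEq V] :
    ((V → Bool) → ℝ) ≃ₗ[ℝ] EuclideanSpace ℝ (V → Bool) :=
  LinearEquiv.smulOfNeZero ℝ _ (√((2 : ℝ) ^ Fintype.card V)⁻¹) (by positivity) ≪≫ₗ
    (WithLp.linearEquiv 2 ℝ ((V → Bool) → ℝ)).symm

variable {V : Type*} [Fintype V] [DecidableEq V]

theorem inner_uniformL2Equiv (f g : (V → Bool) → ℝ) :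
    inner ℝ (uniformL2Equiv V f) (uniformL2Equiv V g) = innerF f g := by
  have happly (h : (V → Bool) → ℝ) :
      uniformL2Equiv V h = √((2 : ℝ) ^ Fintype.card V)⁻¹ • WithLp.toLp 2 h := rfl
  rw [happly, happly, real_inner_smul_left, real_inner_smul_right, ← mul_assoc,
    Real.mul_self_sqrt (by positivity), real_inner_comm, EuclideanSpace.inner_toLp_toLp]
  rfl

theorem exists_orthonormalBasis_uniformL2Equiv {φ : (V → Bool) → (V → Bool) → ℝ}
    (h : ∀ i j, innerF (φ i) (φ j) = if i = j then 1 else 0) :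
    ∃ b : OrthonormalBasis (V → Bool) ℝ (EuclideanSpace ℝ (V → Bool)),
      ∀ i, b i = uniformL2Equiv V (φ i) := by
  have hφ : Orthonormal ℝ fun i => uniformL2Equiv V (φ i) :=
    orthonormal_iff_ite.mpr fun i j => (inner_uniformL2Equiv _ _).trans (h i j)
  have hspan := hφ.linearIndependent.span_eq_top_of_card_eq_finrank' finrank_euclideanSpace.symm
  exact ⟨.mk hφ hspan.ge, congrFun (OrthonormalBasis.coe_mk hφ hspan.ge)⟩

end UniformMeasure

section ExclusionGenerator

theorem swapAt_involutive {V : Type*} [DecidableEq V] (u v : V) :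
    Function.Involutive (swapAt · u v) := by
  intro x
  funext w
  simp only [swapAt]
  split_ifs <;> simp_all

theorem two_mul_sum_sub_comp_mul {X R : Type*} [Fintype X] [CommRing R] {σ : X → X}
    (hσ : Function.Involutive σ) (f g : X → R) :
    2 * ∑ x, (f x - f (σ x)) * g x = ∑ x, (f x - f (σ x)) * (g x - g (σ x)) := by
  have hflip : ∑ x, (f x - f (σ x)) * g x = ∑ x, (f (σ x) - f x) * g (σ x) := by
    simpa [hσ _] using (Equiv.sum_comp hσ.toPerm fun x => (f x - f (σ x)) * g x).symm
  rw [two_mul]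
  nth_rw 2 [hflip]
  rw [← sum_add_distrib]
  exact sum_congr rfl fun x _ => by ring

variable {V : Type*} [Fintype V] [DecidableEq V]

/-- The Dirichlet form of the symmetric exclusion process on `G` with rate `α`. One factor `1 / 2`
in `α / 4` corrects for summing over both orientations of an edge, the other for summing over both
`x` and `x_e`. -/
noncomputable def dirichletForm (G : SimpleGraph V) [DecidableRel G.Adj] (α : ℝ)
    (f g : (V → Bool) → ℝ) : ℝ :=
  ((2 : ℝ) ^ Fintype.card V)⁻¹ * (α / 4 * ∑ u, ∑ v, if G.Adj u v then
    ∑ x, (f x - f (swapAt x u v)) * (g x - g (swapAt x u v)) else 0)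

variable (G G' : SimpleGraph V) [DecidableRel G.Adj] [DecidableRel G'.Adj] (α : ℝ)

theorem dirichletForm_comm (f g : (V → Bool) → ℝ) :
    dirichletForm G α f g = dirichletForm G α g f := by
  simp only [dirichletForm, mul_comm (f _ - _)]

theorem dirichletForm_self_nonneg {α : ℝ} (hα : 0 ≤ α) (f : (V → Bool) → ℝ) :
    0 ≤ dirichletForm G α f f := by
  refine mul_nonneg (by positivity) (mul_nonneg (by positivity) ?_)
  refine sum_nonneg fun u _ => sum_nonneg fun v _ => ?_
  split_ifs
  · exact sum_nonneg fun x _ => mul_self_nonneg _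
  · rfl

theorem innerF_negGen (f g : (V → Bool) → ℝ) :
    innerF (negGen G α f) g = dirichletForm G α f g := by
  have hedge (u v : V) : (∑ x, (if G.Adj u v then f x - f (swapAt x u v) else 0) * g x)
      = (1 / 2) * if G.Adj u v then
          ∑ x, (f x - f (swapAt x u v)) * (g x - g (swapAt x u v)) else 0 := by
    split_ifs
    · rw [← two_mul_sum_sub_comp_mul (swapAt_involutive u v)]
      ring
    · simp
  have hsum : ∑ x, (∑ u, ∑ v, if G.Adj u v then f x - f (swapAt x u v) else 0) * g x
      = ∑ u, ∑ v, ∑ x, (if G.Adj u v then f x - f (swapAt x u v) else 0) * g x := by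
    simp only [sum_mul]
    rw [sum_comm]
    exact sum_congr rfl fun u _ => sum_comm
  simp only [innerF, negGen, dirichletForm, mul_assoc, ← mul_sum, hsum, hedge]
  ring

/-- The negative generator `negGen G α` as an operator on Euclidean space, transported along
`uniformL2Equiv`. -/
noncomputable def negGenEuclidean :
    EuclideanSpace ℝ (V → Bool) →ₗ[ℝ] EuclideanSpace ℝ (V → Bool) :=
  (uniformL2Equiv V).conj
    { toFun := negGen G α
      map_add' := fun f g => by
        funext x
        simp only [negGen, Pi.add_apply, ← mul_add, ← sum_add_distrib, add_sub_add_comm,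
          ite_add_ite, add_zero]
      map_smul' := fun r f => by
        funext x
        simp only [negGen, Pi.smul_apply, smul_eq_mul, RingHom.id_apply, mul_left_comm r, mul_sum,
          mul_ite, mul_zero, mul_sub] }

theorem negGenEuclidean_uniformL2Equiv (f : (V → Bool) → ℝ) :
    negGenEuclidean G α (uniformL2Equiv V f) = uniformL2Equiv V (negGen G α f) := by
  simp [negGenEuclidean, LinearEquiv.conj_apply_apply]

theorem inner_negGenEuclidean_uniformL2Equiv (f g : (V → Bool) → ℝ) :
    inner ℝ (negGenEuclidean G α (uniformL2Equiv V f)) (uniformL2Equiv V g)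
      = dirichletForm G α f g := by
  rw [negGenEuclidean_uniformL2Equiv, inner_uniformL2Equiv, innerF_negGen]

theorem isPositive_negGenEuclidean {α : ℝ} (hα : 0 ≤ α) : (negGenEuclidean G α).IsPositive := by
  refine ⟨(uniformL2Equiv V).surjective.forall₂.mpr fun f g => ?_,
    (uniformL2Equiv V).surjective.forall.mpr fun f => ?_⟩
  · rw [real_inner_comm _ (uniformL2Equiv V f), inner_negGenEuclidean_uniformL2Equiv,
      inner_negGenEuclidean_uniformL2Equiv, dirichletForm_comm]
  · rw [inner_negGenEuclidean_uniformL2Equiv]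
    exact dirichletForm_self_nonneg G hα f

variable {G G'}

theorem negGen_sub_of_le (hle : G' ≤ G) (f : (V → Bool) → ℝ) :
    negGen G α f - negGen G' α f = negGen (G \ G') α f := by
  funext x
  simp only [negGen, Pi.sub_apply, ← mul_sub, ← sum_sub_distrib, SimpleGraph.sdiff_adj]
  congr! 3 with u _ v
  have hadj := @hle u v
  split_ifs <;> simp_all

theorem negGenEuclidean_mono {α : ℝ} (hα : 0 ≤ α) (hle : G' ≤ G) :
    negGenEuclidean G' α ≤ negGenEuclidean G α := by
  have hsub : negGenEuclidean G α - negGenEuclidean G' α = negGenEuclidean (G \ G') α := by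
    refine LinearMap.ext ((uniformL2Equiv V).surjective.forall.mpr fun f => ?_)
    simp only [LinearMap.sub_apply, negGenEuclidean_uniformL2Equiv, ← map_sub,
      negGen_sub_of_le α hle]
  rw [LinearMap.le_def, hsub]
  exact isPositive_negGenEuclidean _ hα

theorem negGenEuclidean_uniformL2Equiv_eq_smul {α c : ℝ} {φ : (V → Bool) → ℝ}
    (hφ : ∀ x, negGen G α φ x = c * φ x) :
    negGenEuclidean G α (uniformL2Equiv V φ) = c • uniformL2Equiv V φ := by
  rw [negGenEuclidean_uniformL2Equiv, ← map_smul]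
  exact congrArg _ (funext hφ)

end ExclusionGenerator

theorem monotonicity_inequality_general {V : Type*} [Fintype V] [DecidableEq V]
    {G G' : SimpleGraph V} [DecidableRel G.Adj] [DecidableRel G'.Adj] (hle : G' ≤ G)
    {α : ℝ} (hα : 0 ≤ α) {ψ χ : (V → Bool) → (V → Bool) → ℝ} {lam mu : (V → Bool) → ℝ}
    (heigψ : ∀ j x, negGen G α (ψ j) x = lam j * ψ j x)
    (heigχ : ∀ j x, negGen G' α (χ j) x = mu j * χ j x)
    (horthψ : ∀ i j, innerF (ψ i) (ψ j) = if i = j then 1 else 0)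
    (horthχ : ∀ i j, innerF (χ i) (χ j) = if i = j then 1 else 0)
    (f : (V → Bool) → ℝ) (k : ℝ) {k' : ℝ} (hk' : 0 < k') :
    (∑ j, if k' < mu j then (innerF f (χ j)) ^ 2 else 0)
      ≤ (√((k / k') * ∑ j, if 0 < lam j ∧ lam j ≤ k then (innerF f (ψ j)) ^ 2 else 0)
          + √(∑ j, if k < lam j then (innerF f (ψ j)) ^ 2 else 0)) ^ 2 := by
  obtain ⟨b, hb⟩ := exists_orthonormalBasis_uniformL2Equiv horthψ
  obtain ⟨b', hb'⟩ := exists_orthonormalBasis_uniformL2Equiv horthχ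
  have hψ j : innerF f (ψ j) ^ 2 = ‖inner ℝ (b j) (uniformL2Equiv V f)‖ ^ 2 := by
    rw [hb, real_inner_comm, inner_uniformL2Equiv, Real.norm_eq_abs, sq_abs]
  have hχ j : innerF f (χ j) ^ 2 = ‖inner ℝ (b' j) (uniformL2Equiv V f)‖ ^ 2 := by
    rw [hb', real_inner_comm, inner_uniformL2Equiv, Real.norm_eq_abs, sq_abs]
  have hbeig j : negGenEuclidean G α (b j) = lam j • b j := by
    rw [hb, negGenEuclidean_uniformL2Equiv_eq_smul (heigψ j)]
  have hbeig' j : negGenEuclidean G' α (b' j) = mu j • b' j := by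
    rw [hb', negGenEuclidean_uniformL2Equiv_eq_smul (heigχ j)]
  have hbound := norm_coordProj_lt_le_of_le (isPositive_negGenEuclidean G' hα)
    (negGenEuclidean_mono hα hle) hbeig hbeig' hk' k (uniformL2Equiv V f)
  simp only [← sum_filter, hψ, hχ]
  rw [← norm_coordProj_sq b', ← norm_coordProj_sq b {j | k < lam j}, Real.sqrt_sq (norm_nonneg _)]
  gcongr

/-- Key spectral inequality for the monotonicity theorem: if E(G') ⊆ E(G), the exclusion
generators on G and G' (same rate) have equal kernels, and {ψⱼ}, {χⱼ} are orthonormal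
eigenbases, then the high-frequency mass of f with respect to G' is controlled by the
spectral masses with respect to G. -/
theorem monotonicity_inequality {V : Type*} [Fintype V] [DecidableEq V]
    (G G' : SimpleGraph V) [DecidableRel G.Adj] [DecidableRel G'.Adj]
    (hG : G.Connected) (hG' : G'.Connected)
    (hsub : ∀ u v, G'.Adj u v → G.Adj u v)
    (α : ℝ) (hα : 0 < α)
    (ψ χ : (V → Bool) → (V → Bool) → ℝ) (lam mu : (V → Bool) → ℝ)
    (heigψ : ∀ j x, negGen G α (ψ j) x = lam j * ψ j x)
    (heigχ : ∀ j x, negGen G' α (χ j) x = mu j * χ j x)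
    (horthψ : ∀ i j, innerF (ψ i) (ψ j) = if i = j then 1 else 0)
    (horthχ : ∀ i j, innerF (χ i) (χ j) = if i = j then 1 else 0)
    (hker : Submodule.span ℝ {g | ∃ j, lam j = 0 ∧ g = ψ j}
          = Submodule.span ℝ {g | ∃ j, mu j = 0 ∧ g = χ j})
    (f : (V → Bool) → ℝ) (k k' : ℝ) (hk : 0 < k) (hk' : 0 < k') :
    (∑ j, if k' < mu j then (innerF f (χ j)) ^ 2 else 0)
      ≤ (Real.sqrt ((k / k') *
            ∑ j, if 0 < lam j ∧ lam j ≤ k then (innerF f (ψ j)) ^ 2 else 0)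
          + Real.sqrt (∑ j, if k < lam j then (innerF f (ψ j)) ^ 2 else 0)) ^ 2 := by
  exact monotonicity_inequality_general (SimpleGraph.le_iff_adj.mpr hsub) hα.le heigψ heigχ horthψ
    horthχ f k hk'
end
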